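/- arXiv:2312.11934 — 6 statements merged into one kernel-verified Lean document; each statement's English description precedes it below -/
import Mathlib

section
/- Let α₁, α₂, β₁, γ₂ be positive reals, let β₂, γ₁ be nonnegative reals with β₂·γ₁ = 0, let κ_L, κ_X, κ_Y be positive reals, and let i, j ≥ 1 be natural numbers. Assume the genericity conditions: if β₂ ≠ 0 then α₂β₁ ≠ α₁β₂, and if γ₁ ≠ 0 then α₁γ₂ ≠ α₂γ₁. Then C(i+1,j+1)² = C(i,j+2)·C(i+2,j) if and only if β₂ = 0 and γ₁ = 0 (i.e., if and only if there is no directed edge between X and Y). -/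
/-- Theorem 4.2: with the genericity conditions, the extended tetrad
constraint `C(i+1,j+1)² = C(i,j+2)·C(i+2,j)` holds iff there is no directed edge
between `X` and `Y`, i.e. iff `β₂ = 0` and `γ₁ = 0`. -/
theorem stmt1 (α₁ α₂ β₁ β₂ γ₁ γ₂ κL κX κY : ℝ) (i j : ℕ)
    (hα₁ : 0 < α₁) (hα₂ : 0 < α₂) (hβ₁ : 0 < β₁) (hγ₂ : 0 < γ₂)
    (hβ₂ : 0 ≤ β₂) (hγ₁ : 0 ≤ γ₁) (hacyc : β₂ * γ₁ = 0)
    (hκL : 0 < κL) (hκX : 0 < κX) (hκY : 0 < κY)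
    (hi : 1 ≤ i) (hj : 1 ≤ j)
    (hgen₁ : β₂ ≠ 0 → α₂ * β₁ ≠ α₁ * β₂)
    (hgen₂ : γ₁ ≠ 0 → α₁ * γ₂ ≠ α₂ * γ₁)
    (C : ℕ → ℕ → ℝ)
    (hC : ∀ a b : ℕ, C a b =
      α₁ ^ a * α₂ ^ b * κL + β₁ ^ a * β₂ ^ b * κX + γ₁ ^ a * γ₂ ^ b * κY) :
    C (i+1) (j+1) ^ 2 = C i (j+2) * C (i+2) j ↔ (β₂ = 0 ∧ γ₁ = 0) := by
  have hid : C i (j+2) * C (i+2) j - C (i+1) (j+1) ^ 2 =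
      (α₁ ^ i * α₂ ^ j * κL) * (β₁ ^ i * β₂ ^ j * κX) * (α₂ * β₁ - α₁ * β₂) ^ 2
      + (α₁ ^ i * α₂ ^ j * κL) * (γ₁ ^ i * γ₂ ^ j * κY) * (α₁ * γ₂ - α₂ * γ₁) ^ 2
      + (β₁ ^ i * β₂ ^ j * κX) * (γ₁ ^ i * γ₂ ^ j * κY) * (β₁ * γ₂ - β₂ * γ₁) ^ 2 := by
    simp only [hC, pow_succ]
    ring
  have hp : 0 < α₁ ^ i * α₂ ^ j * κL := by positivity
  have hq : 0 ≤ β₁ ^ i * β₂ ^ j * κX := by positivity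
  have hr : 0 ≤ γ₁ ^ i * γ₂ ^ j * κY := by positivity
  have h1 := mul_nonneg (mul_nonneg hp.le hq) (sq_nonneg (α₂ * β₁ - α₁ * β₂))
  have h2 := mul_nonneg (mul_nonneg hp.le hr) (sq_nonneg (α₁ * γ₂ - α₂ * γ₁))
  have h3 := mul_nonneg (mul_nonneg hq hr) (sq_nonneg (β₁ * γ₂ - β₂ * γ₁))
  constructor
  · intro h
    constructor
    · by_contra hne
      have hb : 0 < β₂ := lt_of_le_of_ne hβ₂ (Ne.symm hne)
      have hs : 0 < (α₂ * β₁ - α₁ * β₂) ^ 2 := sq_pos_of_ne_zero (sub_ne_zero.mpr (hgen₁ hne))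
      have hq' : 0 < β₁ ^ i * β₂ ^ j * κX := by positivity
      have := mul_pos (mul_pos hp hq') hs
      linarith
    · by_contra hne
      have hb : 0 < γ₁ := lt_of_le_of_ne hγ₁ (Ne.symm hne)
      have hs : 0 < (α₁ * γ₂ - α₂ * γ₁) ^ 2 := sq_pos_of_ne_zero (sub_ne_zero.mpr (hgen₂ hne))
      have hr' : 0 < γ₁ ^ i * γ₂ ^ j * κY := by positivity
      have := mul_pos (mul_pos hp hr') hs
      linarith
  · rintro ⟨hb, hg⟩
    have e1 : β₂ ^ j = 0 := by rw [hb]; exact zero_pow (by omega)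
    have e2 : γ₁ ^ i = 0 := by rw [hg]; exact zero_pow (by omega)
    rw [e1, e2] at hid
    linarith
end

section
/- Let α₁, α₂, β₁, β₂, κ_L, κ_E be real numbers with α₁ ≠ 0 and β₁ ≠ 0, and let i, j be natural numbers. Then for every real θ, a·θ² + b·θ + c = a·(θ − α₂/α₁)·(θ − β₂/β₁), where a := C(i+2,j+1)² − C(i+1,j+2)·C(i+3,j), b := C(i,j+3)·C(i+3,j) − C(i+1,j+2)·C(i+2,j+1), and c := C(i+1,j+2)² − C(i,j+3)·C(i+2,j+1). -/
/-- the paper's quadratic factors as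
`a·θ² + b·θ + c = a·(θ − α₂/α₁)·(θ − β₂/β₁)`, where the coefficients are built
from the cumulants `C a b = α₁^a·α₂^b·κL + β₁^a·β₂^b·κE`. -/
theorem stmt2 (α₁ α₂ β₁ β₂ κL κE : ℝ) (hα₁ : α₁ ≠ 0) (hβ₁ : β₁ ≠ 0) (i j : ℕ)
    (C : ℕ → ℕ → ℝ)
    (hC : ∀ a b : ℕ, C a b = α₁ ^ a * α₂ ^ b * κL + β₁ ^ a * β₂ ^ b * κE) :
    ∀ θ : ℝ,
      (C (i+2) (j+1) ^ 2 - C (i+1) (j+2) * C (i+3) j) * θ ^ 2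
      + (C i (j+3) * C (i+3) j - C (i+1) (j+2) * C (i+2) (j+1)) * θ
      + (C (i+1) (j+2) ^ 2 - C i (j+3) * C (i+2) (j+1))
      = (C (i+2) (j+1) ^ 2 - C (i+1) (j+2) * C (i+3) j)
        * (θ - α₂ / α₁) * (θ - β₂ / β₁) := by
  intro θ
  obtain ⟨r, hr⟩ : ∃ r, r = α₂ / α₁ := ⟨_, rfl⟩
  obtain ⟨s, hs⟩ : ∃ s, s = β₂ / β₁ := ⟨_, rfl⟩
  have h1 : α₂ = r * α₁ := by rw [hr]; field_simp
  have h2 : β₂ = s * β₁ := by rw [hs]; field_simp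
  rw [← hr, ← hs]
  have e0 : C (i+3) j = α₁ ^ i * α₂ ^ j * κL * α₁ ^ 3 + β₁ ^ i * β₂ ^ j * κE * β₁ ^ 3 := by
    rw [hC]; ring
  have e1 : C (i+2) (j+1) = α₁ ^ i * α₂ ^ j * κL * α₁ ^ 3 * r
      + β₁ ^ i * β₂ ^ j * κE * β₁ ^ 3 * s := by
    rw [hC, pow_succ α₂, pow_succ β₂]
    linear_combination (α₁ ^ (i+2) * α₂ ^ j * κL) * h1 + (β₁ ^ (i+2) * β₂ ^ j * κE) * h2
  have e2 : C (i+1) (j+2) = α₁ ^ i * α₂ ^ j * κL * α₁ ^ 3 * r ^ 2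
      + β₁ ^ i * β₂ ^ j * κE * β₁ ^ 3 * s ^ 2 := by
    rw [hC, pow_add α₂, pow_add β₂]
    have a : α₂ ^ 2 = (r * α₁) ^ 2 := by rw [← h1]
    have b : β₂ ^ 2 = (s * β₁) ^ 2 := by rw [← h2]
    rw [a, b]; ring
  have e3 : C i (j+3) = α₁ ^ i * α₂ ^ j * κL * α₁ ^ 3 * r ^ 3
      + β₁ ^ i * β₂ ^ j * κE * β₁ ^ 3 * s ^ 3 := by
    rw [hC, pow_add α₂, pow_add β₂]
    have a : α₂ ^ 3 = (r * α₁) ^ 3 := by rw [← h1]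
    have b : β₂ ^ 3 = (s * β₁) ^ 3 := by rw [← h2]
    rw [a, b]; ring
  rw [e0, e1, e2, e3]
  generalize α₁ ^ i * α₂ ^ j * κL * α₁ ^ 3 = U
  generalize β₁ ^ i * β₂ ^ j * κE * β₁ ^ 3 = V
  ring
end

section
/- Let α₁, α₂, β₁, β₂, κ_L, κ_E be real numbers with α₁ ≠ 0 and β₁ ≠ 0, and let i, j ≥ 1 be natural numbers. Then both ratios of mixing coefficients θ₁ := α₂/α₁ and θ₂ := β₂/β₁ are roots of the quadratic equation (C(i+2,j+1)² − C(i+1,j+2)·C(i+3,j))·θ² + (C(i,j+3)·C(i+3,j) − C(i+1,j+2)·C(i+2,j+1))·θ + (C(i+1,j+2)² − C(i,j+3)·C(i+2,j+1)) = 0. -/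
/-- Theorem 4.1: both ratios of mixing coefficients `α₂/α₁` and
`β₂/β₁` are roots of the paper's quadratic equation in the cumulants
`C a b = α₁^a·α₂^b·κL + β₁^a·β₂^b·κE`. -/
theorem stmt3 (α₁ α₂ β₁ β₂ κL κE : ℝ) (hα₁ : α₁ ≠ 0) (hβ₁ : β₁ ≠ 0)
    (i j : ℕ) (hi : 1 ≤ i) (hj : 1 ≤ j)
    (C : ℕ → ℕ → ℝ)
    (hC : ∀ a b : ℕ, C a b = α₁ ^ a * α₂ ^ b * κL + β₁ ^ a * β₂ ^ b * κE) :
    ((C (i+2) (j+1) ^ 2 - C (i+1) (j+2) * C (i+3) j) * (α₂ / α₁) ^ 2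
      + (C i (j+3) * C (i+3) j - C (i+1) (j+2) * C (i+2) (j+1)) * (α₂ / α₁)
      + (C (i+1) (j+2) ^ 2 - C i (j+3) * C (i+2) (j+1)) = 0)
    ∧
    ((C (i+2) (j+1) ^ 2 - C (i+1) (j+2) * C (i+3) j) * (β₂ / β₁) ^ 2
      + (C i (j+3) * C (i+3) j - C (i+1) (j+2) * C (i+2) (j+1)) * (β₂ / β₁)
      + (C (i+1) (j+2) ^ 2 - C i (j+3) * C (i+2) (j+1)) = 0) := by
  obtain ⟨x, rfl⟩ : ∃ x, α₂ = x * α₁ := ⟨α₂ / α₁, by field_simp⟩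
  obtain ⟨y, rfl⟩ : ∃ y, β₂ = y * β₁ := ⟨β₂ / β₁, by field_simp⟩
  rw [mul_div_cancel_right₀ _ hα₁, mul_div_cancel_right₀ _ hβ₁]
  simp only [hC, mul_pow, pow_add]
  generalize α₁ ^ i = p
  generalize β₁ ^ i = q
  generalize α₁ ^ j = r
  generalize β₁ ^ j = s
  generalize x ^ j = u
  generalize y ^ j = v
  constructor <;> ring
end

section
/- Let α₁, α₂, β₁, β₂, κ_L, κ_E be nonzero real numbers with α₂β₁ ≠ α₁β₂, and let i, j be natural numbers. Then the leading coefficient of the paper's quadratic equation is nonzero: C(i+2,j+1)² − C(i+1,j+2)·C(i+3,j) ≠ 0. -/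
/-- the leading coefficient of the paper's quadratic equation is
nonzero when all parameters are nonzero and the ratios of mixing coefficients
differ; here `C a b = α₁^a·α₂^b·κL + β₁^a·β₂^b·κE`. -/
theorem stmt5 (α₁ α₂ β₁ β₂ κL κE : ℝ)
    (hα₁ : α₁ ≠ 0) (hα₂ : α₂ ≠ 0) (hβ₁ : β₁ ≠ 0) (hβ₂ : β₂ ≠ 0)
    (hκL : κL ≠ 0) (hκE : κE ≠ 0) (hratio : α₂ * β₁ ≠ α₁ * β₂) (i j : ℕ)
    (C : ℕ → ℕ → ℝ)
    (hC : ∀ a b : ℕ, C a b = α₁ ^ a * α₂ ^ b * κL + β₁ ^ a * β₂ ^ b * κE) :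
    C (i+2) (j+1) ^ 2 - C (i+1) (j+2) * C (i+3) j ≠ 0 := by
  have key : C (i+2) (j+1) ^ 2 - C (i+1) (j+2) * C (i+3) j =
      -((α₁ ^ (i+1) * α₂ ^ j * κL) * (β₁ ^ (i+1) * β₂ ^ j * κE) *
        (α₂ * β₁ - α₁ * β₂) ^ 2) := by
    simp only [hC]
    ring
  rw [key]
  have h : α₂ * β₁ - α₁ * β₂ ≠ 0 := sub_ne_zero.mpr hratio
  exact neg_ne_zero.mpr (mul_ne_zero (mul_ne_zero
    (mul_ne_zero (mul_ne_zero (pow_ne_zero _ hα₁) (pow_ne_zero _ hα₂)) hκL)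
    (mul_ne_zero (mul_ne_zero (pow_ne_zero _ hβ₁) (pow_ne_zero _ hβ₂)) hκE))
    (pow_ne_zero _ h))
end

section
/- Let α₁, α₂, β₁, β₂, κ_L, κ_E be nonzero real numbers with α₂β₁ ≠ α₁β₂ (i.e., the two independent components have different ratios of mixing coefficients), and let i, j ≥ 1 be natural numbers. Then for every real θ, (C(i+2,j+1)² − C(i+1,j+2)·C(i+3,j))·θ² + (C(i,j+3)·C(i+3,j) − C(i+1,j+2)·C(i+2,j+1))·θ + (C(i+1,j+2)² − C(i,j+3)·C(i+2,j+1)) = 0 if and only if θ = α₂/α₁ or θ = β₂/β₁. In particular, the two ratios of mixing coefficients are exactly the two (distinct) roots of the quadratic. -/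
/-- Theorem 4.1, precise form: under genericity, `θ` solves the
paper's quadratic equation iff `θ = α₂/α₁` or `θ = β₂/β₁`; here
`C a b = α₁^a·α₂^b·κL + β₁^a·β₂^b·κE`. -/
theorem stmt6 (α₁ α₂ β₁ β₂ κL κE : ℝ)
    (hα₁ : α₁ ≠ 0) (hα₂ : α₂ ≠ 0) (hβ₁ : β₁ ≠ 0) (hβ₂ : β₂ ≠ 0)
    (hκL : κL ≠ 0) (hκE : κE ≠ 0) (hratio : α₂ * β₁ ≠ α₁ * β₂)
    (i j : ℕ) (hi : 1 ≤ i) (hj : 1 ≤ j)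
    (C : ℕ → ℕ → ℝ)
    (hC : ∀ a b : ℕ, C a b = α₁ ^ a * α₂ ^ b * κL + β₁ ^ a * β₂ ^ b * κE) :
    ∀ θ : ℝ,
      ((C (i+2) (j+1) ^ 2 - C (i+1) (j+2) * C (i+3) j) * θ ^ 2
        + (C i (j+3) * C (i+3) j - C (i+1) (j+2) * C (i+2) (j+1)) * θ
        + (C (i+1) (j+2) ^ 2 - C i (j+3) * C (i+2) (j+1)) = 0)
      ↔ (θ = α₂ / α₁ ∨ θ = β₂ / β₁) := by
  intro θ
  have key : (C (i+2) (j+1) ^ 2 - C (i+1) (j+2) * C (i+3) j) * θ ^ 2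
        + (C i (j+3) * C (i+3) j - C (i+1) (j+2) * C (i+2) (j+1)) * θ
        + (C (i+1) (j+2) ^ 2 - C i (j+3) * C (i+2) (j+1))
      = -((α₁ ^ i * α₂ ^ j * κL) * (β₁ ^ i * β₂ ^ j * κE) * (α₂ * β₁ - α₁ * β₂) ^ 2)
        * ((θ * α₁ - α₂) * (θ * β₁ - β₂)) := by
    simp only [hC, pow_add]
    ring
  have hne : -((α₁ ^ i * α₂ ^ j * κL) * (β₁ ^ i * β₂ ^ j * κE) * (α₂ * β₁ - α₁ * β₂) ^ 2) ≠ 0 := by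
    have h := sub_ne_zero.mpr hratio
    exact neg_ne_zero.mpr (by positivity)
  rw [key, mul_eq_zero, or_iff_right hne, mul_eq_zero, sub_eq_zero, sub_eq_zero,
    eq_div_iff hα₁, eq_div_iff hβ₁]
end

section
/- Let α₁, α₂, β₁, γ₂ be positive reals, β₂, γ₁ nonnegative reals with β₂·γ₁ = 0, κ_L, κ_X, κ_Y positive reals, and i, j ≥ 1 natural numbers; assume the genericity conditions: if β₂ ≠ 0 then α₂β₁ ≠ α₁β₂, and if γ₁ ≠ 0 then α₁γ₂ ≠ α₂γ₁. Define s := C(i+1,j+1)² − C(i,j+2)·C(i+2,j), R_X := (α₁³κ_L + β₁³κ_X + γ₁³κ_Y) − α₁³κ_L − β₁³κ_X, and R_Y := (α₂³κ_L + β₂³κ_X + γ₂³κ_Y) − α₂³κ_L − γ₂³κ_Y. Then exactly one of the following three cases holds, and the observable signatures identify the case: (i) β₂ = 0 and γ₁ = 0 (no directed edge), and then s = 0; (ii) γ₁ = 0 and β₂ ≠ 0 (X is a cause of Y), and then s ≠ 0, R_X = 0 and R_Y ≠ 0; (iii) β₂ = 0 and γ₁ ≠ 0 (Y is a cause of X),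 and then s ≠ 0, R_Y = 0 and R_X ≠ 0. Hence the causal relationship between the two observed variables is identified by the higher-order cumulants. -/
/-- Theorem 4.4: the causal relationship between the two observed
variables is identified by the higher-order cumulants: exactly one of the three
cases (no edge, X → Y, Y → X) holds, with the corresponding observable
signatures in `s`, `R_X`, `R_Y`. Here
`C a b = α₁^a·α₂^b·κL + β₁^a·β₂^b·κX + γ₁^a·γ₂^b·κY`,
`s = C(i+1,j+1)² − C(i,j+2)·C(i+2,j)`,
`R_X = (α₁³κL + β₁³κX + γ₁³κY) − α₁³κL − β₁³κX`, and
`R_Y = (α₂³κL + β₂³κX + γ₂³κY) − α₂³κL − γ₂³κY`. -/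
theorem stmt16 (α₁ α₂ β₁ β₂ γ₁ γ₂ κL κX κY : ℝ) (i j : ℕ)
    (hα₁ : 0 < α₁) (hα₂ : 0 < α₂) (hβ₁ : 0 < β₁) (hγ₂ : 0 < γ₂)
    (hβ₂ : 0 ≤ β₂) (hγ₁ : 0 ≤ γ₁) (hacyc : β₂ * γ₁ = 0)
    (hκL : 0 < κL) (hκX : 0 < κX) (hκY : 0 < κY)
    (hi : 1 ≤ i) (hj : 1 ≤ j)
    (hgen₁ : β₂ ≠ 0 → α₂ * β₁ ≠ α₁ * β₂)
    (hgen₂ : γ₁ ≠ 0 → α₁ * γ₂ ≠ α₂ * γ₁)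
    (C : ℕ → ℕ → ℝ)
    (hC : ∀ a b : ℕ, C a b =
      α₁ ^ a * α₂ ^ b * κL + β₁ ^ a * β₂ ^ b * κX + γ₁ ^ a * γ₂ ^ b * κY)
    (s RX RY : ℝ)
    (hs : s = C (i+1) (j+1) ^ 2 - C i (j+2) * C (i+2) j)
    (hRX : RX = (α₁ ^ 3 * κL + β₁ ^ 3 * κX + γ₁ ^ 3 * κY)
      - α₁ ^ 3 * κL - β₁ ^ 3 * κX)
    (hRY : RY = (α₂ ^ 3 * κL + β₂ ^ 3 * κX + γ₂ ^ 3 * κY)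
      - α₂ ^ 3 * κL - γ₂ ^ 3 * κY) :
    (β₂ = 0 ∧ γ₁ = 0 ∧ s = 0)
    ∨ (γ₁ = 0 ∧ β₂ ≠ 0 ∧ s ≠ 0 ∧ RX = 0 ∧ RY ≠ 0)
    ∨ (β₂ = 0 ∧ γ₁ ≠ 0 ∧ s ≠ 0 ∧ RY = 0 ∧ RX ≠ 0) := by
  have key : s = -((α₁ ^ i * α₂ ^ j * κL) * (β₁ ^ i * β₂ ^ j * κX) * (α₂ * β₁ - α₁ * β₂) ^ 2
      + (α₁ ^ i * α₂ ^ j * κL) * (γ₁ ^ i * γ₂ ^ j * κY) * (α₁ * γ₂ - α₂ * γ₁) ^ 2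
      + (β₁ ^ i * β₂ ^ j * κX) * (γ₁ ^ i * γ₂ ^ j * κY) * (β₁ * γ₂ - β₂ * γ₁) ^ 2) := by
    rw [hs, hC, hC, hC]; ring
  have hi0 : i ≠ 0 := by omega
  have hj0 : j ≠ 0 := by omega
  have hX : RX = γ₁ ^ 3 * κY := by rw [hRX]; ring
  have hY : RY = β₂ ^ 3 * κX := by rw [hRY]; ring
  by_cases hb : β₂ = 0
  · by_cases hc : γ₁ = 0
    · left
      refine ⟨hb, hc, ?_⟩
      rw [key, hb, hc]
      simp [hi0, hj0]
    · right; right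
      have hd := sub_ne_zero.mpr (hgen₂ hc)
      have hcp : 0 < γ₁ := lt_of_le_of_ne hγ₁ (Ne.symm hc)
      refine ⟨hb, hc, ?_, ?_, ?_⟩
      · have h : 0 < (α₁ ^ i * α₂ ^ j * κL) * (γ₁ ^ i * γ₂ ^ j * κY)
            * (α₁ * γ₂ - α₂ * γ₁) ^ 2 := by positivity
        have hz : β₂ ^ j = 0 := by rw [hb]; exact zero_pow hj0
        rw [key, hz]
        intro h0
        linarith
      · rw [hY, hb]; ring
      · rw [hX]; positivity
  · have hc : γ₁ = 0 := (mul_eq_zero.mp hacyc).resolve_left hb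
    right; left
    have hd := sub_ne_zero.mpr (hgen₁ hb)
    have hbp : 0 < β₂ := lt_of_le_of_ne hβ₂ (Ne.symm hb)
    refine ⟨hc, hb, ?_, ?_, ?_⟩
    · have h : 0 < (α₁ ^ i * α₂ ^ j * κL) * (β₁ ^ i * β₂ ^ j * κX)
          * (α₂ * β₁ - α₁ * β₂) ^ 2 := by positivity
      have hz : γ₁ ^ i = 0 := by rw [hc]; exact zero_pow hi0
      rw [key, hz]
      intro h0
      linarith
    · rw [hX, hc]; ring
    · rw [hY]; positivity
end
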